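/- Let C = {N_i, σ_{i,j} | i,j ∈ D and i ≤ j} and D = {M_i, π_{i,j} | i,j ∈ D and i ≤ j} be well-founded directed systems of models of set theory with the same underlying directed partial order (D,≤), with direct limits N_∞ and M_∞ and direct limit maps σ_{i,∞} and π_{i,∞}. Suppose that: (1) N_i ⊆ M_i for all i ∈ D; (2) N_i satisfies 'V = HOD' (every set is ordinal definable) for all i ∈ D; and (3) N_∞, M_∞, and the family {π_{i,∞}}_{i∈D} are uniformly definable over D. Then N_∞ ⊆ M_∞. -/

import Mathlib

/- ## A framework for transitive class/set models of fragments of ZFC,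
     inside the universe `ZFSet` of ZF sets. -/

open FirstOrder FirstOrder.Language

/-- The language of set theory: a single binary relation symbol `∈`. -/
inductive SetRelSym : ℕ → Type
  | mem : SetRelSym 2

/-- The first-order language of set theory. -/
def setL : FirstOrder.Language := ⟨fun _ => Empty, SetRelSym⟩

/-- Evaluation of a term of the language of set theory (terms are just variables). -/
def tval {n : ℕ} (v : Fin n → ZFSet) : setL.Term (Empty ⊕ Fin n) → ZFSet
  | .var (Sum.inl e) => e.elim
  | .var (Sum.inr i) => v i
  | .func f _ => f.elim

/-- Tarskian satisfaction of a formula of the language of set theory in a class `S` of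
ZF-sets (equipped with true membership), under the assignment `v`. -/
def ZSat (S : Set ZFSet) : ∀ {n : ℕ}, setL.BoundedFormula Empty n → (Fin n → ZFSet) → Prop
  | _, .falsum, _ => False
  | _, .equal t u, v => tval v t = tval v u
  | _, .rel R ts, v =>
      match R with
      | SetRelSym.mem => tval v (ts 0) ∈ tval v (ts 1)
  | _, .imp φ ψ, v => ZSat S φ v → ZSat S ψ v
  | _, .all φ, v => ∀ x ∈ S, ZSat S φ (Fin.snoc v x)

/-- Satisfaction of a sentence in a class of ZF-sets. -/
def SatS (S : Set ZFSet) (σ : setL.Sentence) : Prop := ZSat S σ finZeroElim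

/-- A class of ZF-sets is transitive. -/
def IsTransClass (S : Set ZFSet) : Prop := ∀ x ∈ S, ∀ y ∈ x, y ∈ S

/-- `r` is a well-ordering of the set `x`, from the point of view of the class `S`
(Kuratowski pairs code the relation; minimality is required for nonempty subsets of `x`
lying in `S`). -/
def WellOrders (S : Set ZFSet) (r x : ZFSet) : Prop :=
  (∀ a ∈ x, ZFSet.pair a a ∉ r) ∧
  (∀ a ∈ x, ∀ b ∈ x, ∀ c ∈ x, ZFSet.pair a b ∈ r → ZFSet.pair b c ∈ r → ZFSet.pair a c ∈ r) ∧
  (∀ a ∈ x, ∀ b ∈ x, a ≠ b → (ZFSet.pair a b ∈ r ∨ ZFSet.pair b a ∈ r)) ∧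
  (∀ y ∈ S, (∀ z ∈ y, z ∈ x) → y ≠ ∅ → ∃ m ∈ y, ∀ z ∈ y, ZFSet.pair z m ∉ r)

/-- `S` is a transitive model of ZFC⁻, i.e. of ZFC stated with the Replacement Scheme and
the Well-Ordering Theorem but without the Power Set Axiom.  (Extensionality and Foundation
are automatic for transitive classes of ZF-sets.) -/
def ModelsZFCminus (S : Set ZFSet) : Prop :=
  IsTransClass S ∧
  (∅ : ZFSet) ∈ S ∧
  (∀ x ∈ S, ∀ y ∈ S, ({x, y} : ZFSet) ∈ S) ∧
  (∀ x ∈ S, (ZFSet.sUnion x : ZFSet) ∈ S) ∧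
  ZFSet.omega ∈ S ∧
  (∀ (n : ℕ) (φ : setL.BoundedFormula Empty (n + 1)) (p : Fin n → ZFSet),
    (∀ i, p i ∈ S) → ∀ a ∈ S, ∃ b ∈ S, ∀ y, y ∈ b ↔ (y ∈ a ∧ ZSat S φ (Fin.snoc p y))) ∧
  (∀ (n : ℕ) (φ : setL.BoundedFormula Empty (n + 2)) (p : Fin n → ZFSet),
    (∀ i, p i ∈ S) → ∀ a ∈ S,
      (∀ x ∈ a, ∃! y, y ∈ S ∧ ZSat S φ (Fin.snoc (Fin.snoc p x) y)) →
      ∃ b ∈ S, ∀ y, y ∈ b ↔ ∃ x ∈ a, y ∈ S ∧ ZSat S φ (Fin.snoc (Fin.snoc p x) y)) ∧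
  (∀ x ∈ S, ∃ r ∈ S, WellOrders S r x)

/-- `S` is a transitive model of ZFC. -/
def ModelsZFC (S : Set ZFSet) : Prop :=
  ModelsZFCminus S ∧ ∀ x ∈ S, ∃ p ∈ S, ∀ y, y ∈ p ↔ (y ∈ S ∧ y ⊆ x)

/-- `f` is (the graph of) a surjection of `a` onto `b`. -/
def SurjFun (f a b : ZFSet) : Prop :=
  ZFSet.IsFunc a b f ∧ ∀ y ∈ b, ∃ x ∈ a, ZFSet.pair x y ∈ f

/-- `f` is (the graph of) an injection of `a` into `b`. -/
def InjFun (f a b : ZFSet) : Prop :=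
  ZFSet.IsFunc a b f ∧ ∀ x ∈ a, ∀ x' ∈ a, ∀ y, ZFSet.pair x y ∈ f → ZFSet.pair x' y ∈ f → x = x'

/-- `f` is (the graph of) a cofinal function from `β` into the ordinal `α`. -/
def CofinalFun (f β α : ZFSet) : Prop :=
  ZFSet.IsFunc β α f ∧ ∀ ξ ∈ α, ∃ η ∈ β, ∃ ζ, ZFSet.pair η ζ ∈ f ∧ (ξ ∈ ζ ∨ ξ = ζ)

/-- `μ = cof(α)` as computed inside the class `S` (for `S = Set.univ`, the true cofinality). -/
def IsCofOf (S : Set ZFSet) (α μ : ZFSet) : Prop :=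
  μ ∈ S ∧ μ.IsOrdinal ∧ (∃ f ∈ S, CofinalFun f μ α) ∧
  ∀ ν ∈ S, ZFSet.IsOrdinal ν → (∃ f ∈ S, CofinalFun f ν α) → μ ⊆ ν

/-- `κ` is a cardinal from the point of view of the class `S`
(for `S = Set.univ`, a true cardinal). -/
def IsCardIn (S : Set ZFSet) (κ : ZFSet) : Prop :=
  κ.IsOrdinal ∧ ∀ α ∈ κ, ∀ f ∈ S, ¬ SurjFun f α κ

/-- `μ` is an (infinite) regular cardinal from the point of view of the class `S`. -/
def IsRegularIn (S : Set ZFSet) (μ : ZFSet) : Prop :=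
  ZFSet.omega ⊆ μ ∧ IsCardIn S μ ∧ IsCofOf S μ μ

/-- `ν = μ⁺`, the cardinal successor of `μ`, as computed in the class `S`. -/
def CardSuccIn (S : Set ZFSet) (μ ν : ZFSet) : Prop :=
  ν ∈ S ∧ IsCardIn S ν ∧ μ ∈ ν ∧ ∀ ξ ∈ S, IsCardIn S ξ → μ ∈ ξ → ν ⊆ ξ

/-- `μ` is the largest cardinal of the model `S`. -/
def IsLargestCardIn (S : Set ZFSet) (μ : ZFSet) : Prop :=
  μ ∈ S ∧ IsCardIn S μ ∧ ∀ x ∈ S, IsCardIn S x → x ⊆ μ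

/-- `α = sup A`, for `A` a collection of ordinals: `α` is the least ordinal above all of them. -/
def IsSupOf (α : ZFSet) (A : Set ZFSet) : Prop :=
  α.IsOrdinal ∧ (∀ a ∈ A, a ⊆ α) ∧ ∀ β : ZFSet, β.IsOrdinal → (∀ a ∈ A, a ⊆ β) → α ⊆ β

/-- `π` is an elementary embedding (for the language of set theory) from the class `S`
into the class `T`. -/
def IsElem (S T : Set ZFSet) (π : ZFSet → ZFSet) : Prop :=
  (∀ x ∈ S, π x ∈ T) ∧
  ∀ (n : ℕ) (φ : setL.BoundedFormula Empty n) (v : Fin n → ZFSet),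
    (∀ i, v i ∈ S) → (ZSat S φ v ↔ ZSat T φ (fun i => π (v i)))

/-- A directed system of models of set theory: a directed partial order `ι`, transitive
(set) models `M i` of ZFC, and commuting elementary embeddings `pi i j : M i → M j`. -/
structure DirSystem.{u_1} (ι : Type) [PartialOrder ι] where
  M : ι → ZFSet.{u_1}
  pi : ι → ι → ZFSet → ZFSet
  directed : ∀ i j : ι, ∃ k, i ≤ k ∧ j ≤ k
  zfc : ∀ i, ModelsZFC (M i).toSet
  elem : ∀ i j, i ≤ j → IsElem (M i).toSet (M j).toSet (pi i j)
  map_id : ∀ i, ∀ x ∈ M i, pi i i x = x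
  map_comp : ∀ i j k, i ≤ j → j ≤ k → ∀ x ∈ M i, pi j k (pi i j x) = pi i k x

/-- `limit` (a transitive class) together with the maps `e i : M i → limit` is the
(transitivized) direct limit of the well-founded directed system `D`: the maps are
elementary, commute with the system maps, and every element of the limit is in the
range of some `e i`. -/
structure IsDirLimit {ι : Type} [PartialOrder ι] (D : DirSystem ι)
    (limit : Set ZFSet) (e : ι → ZFSet → ZFSet) : Prop where
  trans : IsTransClass limit
  elem : ∀ i, IsElem (D.M i).toSet limit (e i)
  compat : ∀ i j, i ≤ j → ∀ x ∈ D.M i, e j (D.pi i j x) = e i x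
  exhaust : ∀ y ∈ limit, ∃ i, ∃ x ∈ D.M i, e i x = y

/-- The `A`-indexed family of unary relations (sets) `R i` is uniformly definable over the
directed system `D`: some formula `φ(v, u)` with a parameter `a ∈ M i` (moved along by the
system maps) defines `R j` over `M j` for all `j ≥ i`. -/
def UnifDef1 {ι : Type} [PartialOrder ι] (D : DirSystem ι) (A : Set ι)
    (R : ι → Set ZFSet) : Prop :=
  ∃ i ∈ A, ∃ a, a ∈ D.M i ∧ ∃ φ : setL.BoundedFormula Empty 2,
    ∀ j, i ≤ j → j ∈ A ∧ (∀ x ∈ R j, x ∈ D.M j) ∧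
      ∀ x, x ∈ D.M j → (x ∈ R j ↔ ZSat (D.M j).toSet φ ![x, D.pi i j a])

/-- The family of binary relations `R i` is uniformly definable over the directed system `D`. -/
def UnifDef2 {ι : Type} [PartialOrder ι] (D : DirSystem ι)
    (R : ι → ZFSet → ZFSet → Prop) : Prop :=
  ∃ i, ∃ a, a ∈ D.M i ∧ ∃ φ : setL.BoundedFormula Empty 3,
    ∀ j, i ≤ j → (∀ x y, R j x y → x ∈ D.M j ∧ y ∈ D.M j) ∧
      ∀ x, x ∈ D.M j → ∀ y, y ∈ D.M j →
        (R j x y ↔ ZSat (D.M j).toSet φ ![x, y, D.pi i j a])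

/-- `S ⊨ "V = HOD"`: every member of `S` is (the unique element) definable over `(S, ∈)`
from ordinal parameters. -/
def ModelsVeqHOD (S : Set ZFSet) : Prop :=
  ∀ x ∈ S, ∃ (n : ℕ) (φ : setL.BoundedFormula Empty (n + 1)) (p : Fin n → ZFSet),
    (∀ i, p i ∈ S ∧ (p i).IsOrdinal) ∧ ∀ y ∈ S, (ZSat S φ (Fin.snoc p y) ↔ y = x)

section Helpers

/-- Renaming of variables in terms. -/
def renT {n m : ℕ} (g : Fin n → Fin m) (t : setL.Term (Empty ⊕ Fin n)) :
    setL.Term (Empty ⊕ Fin m) := t.relabel (Sum.map id g)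

theorem tval_renT {n m : ℕ} (g : Fin n → Fin m) (t : setL.Term (Empty ⊕ Fin n))
    (v : Fin m → ZFSet) : tval v (renT g t) = tval (v ∘ g) t := by
  cases t with
  | var x =>
    cases x with
    | inl e => exact e.elim
    | inr i => rfl
  | func f _ => exact f.elim

/-- Lifting a renaming under a quantifier. -/
def liftR {n m : ℕ} (g : Fin n → Fin m) : Fin (n + 1) → Fin (m + 1) :=
  Fin.snoc (α := fun _ => Fin (m + 1)) (fun i => (g i).castSucc) (Fin.last m)

/-- Renaming of variables in formulas. -/
def ren : ∀ {n : ℕ}, setL.BoundedFormula Empty n → ∀ {m : ℕ}, (Fin n → Fin m) →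
    setL.BoundedFormula Empty m
  | _, .falsum, _, _ => .falsum
  | _, .equal t u, _, g => .equal (renT g t) (renT g u)
  | _, .rel R ts, _, g => .rel R (fun i => renT g (ts i))
  | _, .imp φ ψ, _, g => .imp (ren φ g) (ren ψ g)
  | _, .all φ, _, g => .all (ren φ (liftR g))

theorem snoc_liftR {n m : ℕ} (g : Fin n → Fin m) (v : Fin m → ZFSet) (x : ZFSet) :
    (Fin.snoc v x : Fin (m + 1) → ZFSet) ∘ liftR g = Fin.snoc (v ∘ g) x := by
  funext i
  refine Fin.lastCases ?_ (fun i => ?_) i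
  · simp [liftR]
  · simp [liftR]

theorem ZSat_ren (S : Set ZFSet) {n : ℕ} (φ : setL.BoundedFormula Empty n) :
    ∀ {m : ℕ} (g : Fin n → Fin m) (v : Fin m → ZFSet),
    ZSat S (ren φ g) v ↔ ZSat S φ (v ∘ g) := by
  induction φ with
  | falsum => intro m g v; exact Iff.rfl
  | equal t u => intro m g v; simp only [ren, ZSat, tval_renT]
  | rel R ts => intro m g v; cases R; simp only [ren, ZSat, tval_renT]
  | imp φ ψ h1 h2 => intro m g v; simp only [ren, ZSat, h1, h2]
  | all φ h => intro m g v; simp only [ren, ZSat, h, snoc_liftR]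

/-- Uniform definability of a family of relations over a family of classes. -/
def UD {J P : Type*} (K : J → Set ZFSet) (par : J → P → ZFSet)
    (R : J → (ℕ → ZFSet) → Prop) : Prop :=
  ∃ (n : ℕ) (φ : setL.BoundedFormula Empty n) (f : Fin n → ℕ ⊕ P),
    ∀ j v, (∀ k, v k ∈ K j) → (R j v ↔ ZSat (K j) φ (fun l => Sum.elim v (par j) (f l)))

namespace UD
variable {J P : Type*} {K : J → Set ZFSet} {par : J → P → ZFSet}

theorem congr {R Q : J → (ℕ → ZFSet) → Prop} (h : UD K par R)
    (e : ∀ j v, (∀ k, v k ∈ K j) → (Q j v ↔ R j v)) : UD K par Q := by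
  obtain ⟨n, φ, f, h⟩ := h
  exact ⟨n, φ, f, fun j v hv => (e j v hv).trans (h j v hv)⟩

theorem elem {R : J → (ℕ → ZFSet) → Prop} (h : UD K par R) {j k : J} {s : ZFSet → ZFSet}
    (hs : IsElem (K j) (K k) s) (hp : ∀ p, par j p ∈ K j) (hp' : ∀ p, s (par j p) = par k p)
    (v : ℕ → ZFSet) (hv : ∀ l, v l ∈ K j) : R j v ↔ R k (fun l => s (v l)) := by
  obtain ⟨n, φ, f, h⟩ := h
  rw [h j v hv, h k _ (fun l => hs.1 _ (hv l)), hs.2 n φ]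
  · have : (fun i => s (Sum.elim v (par j) (f i))) =
        fun l => Sum.elim (fun l => s (v l)) (par k) (f l) := by
      funext i
      cases f i with
      | inl a => rfl
      | inr p => exact hp' p
    rw [this]
  · intro i
    cases f i with
    | inl a => exact hv a
    | inr p => exact hp p

theorem fls : UD K par (fun _ _ => False) :=
  ⟨0, .falsum, Fin.elim0, fun _ _ _ => Iff.rfl⟩

theorem mem (a b : ℕ) : UD K par (fun _ v => v a ∈ v b) :=
  ⟨2, .rel SetRelSym.mem ![.var (Sum.inr 0), .var (Sum.inr 1)], ![Sum.inl a, Sum.inl b],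
    fun _ _ _ => Iff.rfl⟩

theorem eq (a b : ℕ) : UD K par (fun _ v => v a = v b) :=
  ⟨2, .equal (.var (Sum.inr 0)) (.var (Sum.inr 1)), ![Sum.inl a, Sum.inl b],
    fun _ _ _ => Iff.rfl⟩

theorem imp {R Q : J → (ℕ → ZFSet) → Prop} (hR : UD K par R) (hQ : UD K par Q) :
    UD K par (fun j v => R j v → Q j v) := by
  obtain ⟨n, φ, f, h⟩ := hR
  obtain ⟨m, ψ, g, h'⟩ := hQ
  refine ⟨n + m, .imp (ren φ (Fin.castAdd m)) (ren ψ (Fin.natAdd n)), Fin.append f g, ?_⟩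
  intro j v hv
  simp only [ZSat, ZSat_ren, h j v hv, h' j v hv, Function.comp_def, Fin.append_left,
    Fin.append_right]

theorem not {R : J → (ℕ → ZFSet) → Prop} (hR : UD K par R) : UD K par (fun j v => ¬ R j v) :=
  hR.imp fls

theorem and {R Q : J → (ℕ → ZFSet) → Prop} (hR : UD K par R) (hQ : UD K par Q) :
    UD K par (fun j v => R j v ∧ Q j v) :=
  (hR.imp hQ.not).not.congr (fun j v _ => by tauto)

theorem iff {R Q : J → (ℕ → ZFSet) → Prop} (hR : UD K par R) (hQ : UD K par Q) :
    UD K par (fun j v => R j v ↔ Q j v) :=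
  ((hR.imp hQ).and (hQ.imp hR)).congr (fun j v _ => by tauto)

theorem all (k : ℕ) {R : J → (ℕ → ZFSet) → ZFSet → Prop} (h : UD K par fun j v => R j v (v k))
    (hk : ∀ j v x y, R j (Function.update v k x) y ↔ R j v y) :
    UD K par (fun j v => ∀ x ∈ K j, R j v x) := by
  obtain ⟨n, φ, f, h⟩ := h
  classical
  refine ⟨n, .all (ren φ (fun l => if f l = Sum.inl k then Fin.last n else l.castSucc)), f, ?_⟩
  intro j v hv
  simp only [ZSat, ZSat_ren]
  refine forall₂_congr fun x hx => ?_
  have h1 := h j (Function.update v k x) (fun l => by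
    by_cases hl : l = k
    · subst hl; simpa using hx
    · simpa [hl] using hv l)
  simp only [Function.update_self, hk] at h1
  rw [h1]
  have : (fun l => Sum.elim (Function.update v k x) (par j) (f l)) =
    (Fin.snoc (fun l => Sum.elim v (par j) (f l)) x : Fin (n + 1) → ZFSet) ∘
      (fun l => if f l = Sum.inl k then Fin.last n else l.castSucc) := by
    funext l
    by_cases hl : f l = Sum.inl k
    · simp [hl]
    · simp only [Function.comp, hl, if_false, Fin.snoc_castSucc]
      cases hf : f l with
      | inl a =>
        have : a ≠ k := fun e => hl (by rw [hf, e])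
        simp [this]
      | inr p => rfl
  rw [this]

theorem ex (k : ℕ) {R : J → (ℕ → ZFSet) → ZFSet → Prop} (h : UD K par fun j v => R j v (v k))
    (hk : ∀ j v x y, R j (Function.update v k x) y ↔ R j v y) :
    UD K par (fun j v => ∃ x ∈ K j, R j v x) :=
  (UD.all k (R := fun j v x => ¬ R j v x) h.not
    (fun j v x y => not_congr (hk j v x y))).not.congr (fun j v _ => by push Not; rfl)

theorem subst {R : J → (ℕ → ZFSet) → Prop} (h : UD K par R) (τ : ℕ → ℕ ⊕ P)
    (hp : ∀ j p, par j p ∈ K j) :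
    UD K par (fun j v => R j (fun k => Sum.elim v (par j) (τ k))) := by
  obtain ⟨n, φ, f, h⟩ := h
  refine ⟨n, φ, fun l => Sum.elim τ Sum.inr (f l), fun j v hv => ?_⟩
  beta_reduce
  rw [h j _ (fun k => by cases τ k with
    | inl a => exact hv a
    | inr p => exact hp j p)]
  have : (fun l => Sum.elim (fun k => Sum.elim v (par j) (τ k)) (par j) (f l)) =
      fun l => Sum.elim v (par j) (Sum.elim τ Sum.inr (f l)) := by
    funext l
    cases f l <;> rfl
  rw [this]

theorem allFin {n : ℕ} {R : Fin n → J → (ℕ → ZFSet) → Prop} (h : ∀ k, UD K par (R k)) :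
    UD K par (fun j v => ∀ k, R k j v) := by
  induction n with
  | zero => exact (fls.imp fls).congr (fun j v _ => by simp)
  | succ n ih =>
    exact ((h 0).and (ih (fun k => h k.succ))).congr (fun j v _ => Fin.forall_fin_succ)

theorem ord (hK : ∀ j, IsTransClass (K j)) (k : ℕ) : UD K par (fun _ v => (v k).IsOrdinal) := by
  have h1 : UD K par (fun j v => ∀ x ∈ K j, x ∈ v k → ∀ y ∈ K j, y ∈ x → y ∈ v k) := by
    refine UD.all (k + 1) (R := fun j v x => x ∈ v k → ∀ y ∈ K j, y ∈ x → y ∈ v k) ?_ ?_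
    · refine (UD.mem _ _).imp ?_
      refine UD.all (k + 2) (R := fun j v y => y ∈ v (k + 1) → y ∈ v k)
        ((UD.mem _ _).imp (UD.mem _ _)) ?_
      intro j v x y; simp
    · intro j v x y; simp
  have h2 : UD K par (fun j v => ∀ x ∈ K j, x ∈ v k → ∀ y ∈ K j, y ∈ x → ∀ z ∈ K j,
      z ∈ y → z ∈ x) := by
    refine UD.all (k + 1) (R := fun j v x => x ∈ v k → ∀ y ∈ K j, y ∈ x → ∀ z ∈ K j,
      z ∈ y → z ∈ x) ?_ ?_
    · refine (UD.mem _ _).imp ?_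
      refine UD.all (k + 2) (R := fun j v y => y ∈ v (k + 1) → ∀ z ∈ K j,
        z ∈ y → z ∈ v (k + 1)) ((UD.mem _ _).imp ?_) ?_
      · refine UD.all (k + 3) (R := fun j v z => z ∈ v (k + 2) → z ∈ v (k + 1))
          ((UD.mem _ _).imp (UD.mem _ _)) ?_
        intro j v x y; simp
      · intro j v x y; simp
    · intro j v x y; simp
  refine (h1.and h2).congr ?_
  intro j v hv
  constructor
  · intro h
    exact ⟨fun x _ hx y _ hy => h.mem_trans hy hx, fun x _ hx y _ hy z _ hz => h.mem_trans' hz hy hx⟩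
  · rintro ⟨h1, h2⟩
    have t := hK j
    refine ⟨fun x hx y hy => ?_, fun {z y x} hz hy hx => ?_⟩
    · have hx' := t _ (hv k) _ hx
      exact h1 x hx' hx y (t _ hx' _ hy) hy
    · have hx' := t _ (hv k) _ hx
      have hy' := t _ hx' _ hy
      exact h2 x hx' hx y hy' hy z (t _ hy' _ hz) hz

theorem tval_var {n : ℕ} (t : setL.Term (Empty ⊕ Fin n)) : ∃ l : Fin n,
    t = .var (Sum.inr l) := by
  cases t with
  | var x =>
    cases x with
    | inl e => exact e.elim
    | inr i => exact ⟨i, rfl⟩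
  | func f _ => exact f.elim

/-- relativization -/
theorem rel {N : Set ZFSet} (hN : ∀ j, N ⊆ K j) (h : ∀ k, UD K par (fun _ v => v k ∈ N))
    {n : ℕ} (φ : setL.BoundedFormula Empty n) :
    UD K par (fun _ v => ZSat N φ (fun k : Fin n => v k)) := by
  induction φ with
  | falsum => exact fls
  | equal t u =>
    obtain ⟨a, ha⟩ := tval_var t
    obtain ⟨b, hb⟩ := tval_var u
    subst ha hb
    exact UD.eq a b
  | rel R ts =>
    cases R
    obtain ⟨a, ha⟩ := tval_var (ts 0)
    obtain ⟨b, hb⟩ := tval_var (ts 1)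
    simp only [ZSat, ha, hb]
    exact UD.mem a b
  | imp φ ψ h1 h2 => exact h1.imp h2
  | @all n φ ih =>
    have : UD K par (fun j v => ∀ x ∈ K j, x ∈ N →
        ZSat N φ (Fin.snoc (fun k : Fin n => v k) x : Fin (n + 1) → ZFSet)) := by
      refine UD.all n (R := fun j v x => x ∈ N →
        ZSat N φ (Fin.snoc (fun k : Fin n => v k) x : Fin (n + 1) → ZFSet)) ?_ ?_
      · refine (h n).imp (ih.congr fun j v _ => ?_)
        have : (Fin.snoc (fun k : Fin n => v k) (v n) : Fin (n + 1) → ZFSet) =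
            fun k : Fin (n + 1) => v k := by
          funext k
          refine Fin.lastCases ?_ (fun k => ?_) k <;> simp
        rw [this]
      · intro j v x y
        have : (fun k : Fin n => Function.update v n x k) = fun k : Fin n => v k := by
          funext k
          rw [Function.update_of_ne (ne_of_lt k.2)]
        rw [this]
    refine this.congr fun j v _ => ?_
    exact ⟨fun h x _ hx => h x hx, fun h x hx => h x (hN j hx) hx⟩

end UD

/-- Transfer of unique definability. -/
theorem transfer_def.{u} {S T : Set ZFSet.{u}} {s : ZFSet.{u} → ZFSet.{u}} (hs : IsElem S T s) {n : ℕ}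
    (φ : setL.BoundedFormula Empty (n + 1)) (p : Fin n → ZFSet) (hp : ∀ i, p i ∈ S)
    (x : ZFSet) (hx : x ∈ S) (h : ∀ y ∈ S, (ZSat S φ (Fin.snoc p y) ↔ y = x)) :
    ∀ y ∈ T, (ZSat T φ (Fin.snoc (fun i => s (p i)) y) ↔ y = s x) := by
  let g : Fin (n + 1) → Fin (n + 2) :=
    Fin.snoc (α := fun _ => Fin (n + 2)) (fun i => i.castSucc.castSucc) (Fin.last (n + 1))
  let φ' := ren φ g
  let e : setL.BoundedFormula Empty (n + 2) :=
    .equal (.var (Sum.inr (Fin.last (n + 1)))) (.var (Sum.inr (Fin.last n).castSucc))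
  have key : ∀ (U : Set ZFSet.{u}) (q : Fin n → ZFSet.{u}) (y z : ZFSet.{u}),
      (ZSat U φ' (Fin.snoc (Fin.snoc q z : Fin (n + 1) → ZFSet) y) ↔ ZSat U φ (Fin.snoc q y)) ∧
      (ZSat U e (Fin.snoc (Fin.snoc q z : Fin (n + 1) → ZFSet) y) ↔ y = z) := by
    intro U q y z
    constructor
    · simp only [φ', ZSat_ren]
      have : (Fin.snoc (Fin.snoc q z : Fin (n + 1) → ZFSet) y : Fin (n + 2) → ZFSet) ∘ g
          = Fin.snoc q y := by
        funext i
        refine Fin.lastCases ?_ (fun i => ?_) i <;> simp [g]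
      rw [this]
    · simp [e, ZSat, tval]
  have h1 := hs.2 (n + 1) (.all (.imp φ' e)) (Fin.snoc p x) (by
    intro i; refine Fin.lastCases ?_ (fun i => ?_) i <;> simp [hx, hp])
  have h2 := hs.2 (n + 1) (.all (.imp e φ')) (Fin.snoc p x) (by
    intro i; refine Fin.lastCases ?_ (fun i => ?_) i <;> simp [hx, hp])
  have e1 : (fun i => s ((Fin.snoc p x : Fin (n + 1) → ZFSet) i)) =
      (Fin.snoc (fun i => s (p i)) (s x) : Fin (n + 1) → ZFSet) := by
    funext i
    refine Fin.lastCases ?_ (fun i => ?_) i <;> simp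
  rw [e1] at h1 h2
  simp only [ZSat, key] at h1 h2
  intro y hy
  exact ⟨fun a => h1.1 (fun y hy => (h y hy).1) y hy a, fun a => h2.1 (fun y hy => (h y hy).2) y hy a⟩

theorem preimage_set.{u} {S : Set ZFSet.{u}} (hS : ModelsZFCminus S)
    (χ : setL.BoundedFormula Empty 3) (c : ZFSet.{u}) (hc : c ∈ S) (s : ZFSet.{u} → ZFSet.{u})
    (hχ : ∀ x ∈ S, ∀ y ∈ S, (s x = y ↔ ZSat S χ ![x, y, c]))
    (hinj : ∀ x ∈ S, ∀ y ∈ S, s x = s y → x = y) (y : ZFSet.{u}) (hy : y ∈ S) :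
    ∃ b ∈ S, ∀ z ∈ S, (z ∈ b ↔ ∃ w ∈ S, w ∈ y ∧ ZSat S χ ![z, w, c]) := by
  obtain ⟨htr, -, -, -, -, hsep, hrep, -⟩ := hS
  have e3 : ∀ w z : ZFSet.{u}, (Fin.snoc (Fin.snoc ![c] w : Fin 2 → ZFSet.{u}) z : Fin 3 → ZFSet.{u}) ∘
      ![2, 1, 0] = ![z, w, c] := by
    intro w z; funext i; fin_cases i <;> rfl
  obtain ⟨d, hd, hd'⟩ := hsep 1 (.imp (.all (.imp (ren χ ![2, 1, 0]) .falsum)) .falsum) ![c]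
    (by intro i; fin_cases i; exact hc) y hy
  simp only [ZSat, ZSat_ren, e3] at hd'
  obtain ⟨b, hb, hb'⟩ := hrep 1 (ren χ ![2, 1, 0]) ![c] (by intro i; fin_cases i; exact hc) d hd
    (by
      intro w hw
      have hw' := (hd' w).1 hw
      have hwS := htr _ hy _ hw'.1
      simp only [ZSat_ren, e3]
      have : ∃ z ∈ S, ZSat S χ ![z, w, c] := by
        by_contra hcon
        exact hw'.2 (fun z hz h => hcon ⟨z, hz, h⟩)
      obtain ⟨z, hz, hzw⟩ := this
      refine ⟨z, ⟨hz, hzw⟩, ?_⟩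
      rintro z' ⟨hz', h'⟩
      exact hinj _ hz' _ hz (((hχ _ hz' _ hwS).2 h').trans ((hχ _ hz _ hwS).2 hzw).symm))
  simp only [ZSat_ren, e3] at hb'
  refine ⟨b, hb, fun z hz => (hb' z).trans ?_⟩
  constructor
  · rintro ⟨w, hw, -, h⟩
    have := ((hd' w).1 hw).1
    exact ⟨w, htr _ hy _ this, this, h⟩
  · rintro ⟨w, hw, hwy, h⟩
    exact ⟨w, (hd' w).2 ⟨hwy, fun hh => hh z hz h⟩, hz, h⟩

theorem elem_inj.{u} {S T : Set ZFSet.{u}} {s : ZFSet.{u} → ZFSet.{u}} (h : IsElem S T s) :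
    ∀ x ∈ S, ∀ y ∈ S, s x = s y → x = y := by
  intro x hx y hy e
  have := h.2 2 (.equal (.var (Sum.inr 0)) (.var (Sum.inr 1))) ![x, y]
    (by intro i; fin_cases i <;> assumption)
  exact this.2 e

theorem elem_mem.{u} {S T : Set ZFSet.{u}} {s : ZFSet.{u} → ZFSet.{u}} (h : IsElem S T s) :
    ∀ x ∈ S, ∀ y ∈ S, (x ∈ y ↔ s x ∈ s y) := by
  intro x hx y hy
  exact h.2 2 (.rel SetRelSym.mem ![.var (Sum.inr 0), .var (Sum.inr 1)]) ![x, y]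
    (by intro i; fin_cases i <;> assumption)

theorem elem_chi.{u} {S T : Set ZFSet.{u}} {s : ZFSet.{u} → ZFSet.{u}} (h : IsElem S T s)
    (χ : setL.BoundedFormula Empty 3) {x y z : ZFSet.{u}} (hx : x ∈ S) (hy : y ∈ S) (hz : z ∈ S) :
    (ZSat S χ ![x, y, z] ↔ ZSat T χ ![s x, s y, s z]) := by
  rw [h.2 3 χ ![x, y, z] (by intro i; fin_cases i <;> assumption)]
  have : (fun i => s (![x, y, z] i)) = ![s x, s y, s z] := by
    funext i; fin_cases i <;> rfl
  rw [this]

theorem preimage_transfer.{u} {S T : Set ZFSet.{u}} {s : ZFSet.{u} → ZFSet.{u}} (h : IsElem S T s)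
    (χ : setL.BoundedFormula Empty 3) {c y : ZFSet.{u}} (hc : c ∈ S) (hy : y ∈ S)
    (hS : ∃ b ∈ S, ∀ z ∈ S, (z ∈ b ↔ ∃ w ∈ S, w ∈ y ∧ ZSat S χ ![z, w, c])) :
    ∃ b ∈ T, ∀ z ∈ T, (z ∈ b ↔ ∃ w ∈ T, w ∈ s y ∧ ZSat T χ ![z, w, s c]) := by
  let K : Bool → Set ZFSet.{u} := fun j => cond j T S
  let par : Bool → Empty → ZFSet.{u} := fun _ e => e.elim
  have hχ : UD K par (fun j v => ZSat (K j) χ ![v 3, v 4, v 0]) := by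
    refine ⟨3, χ, ![Sum.inl 3, Sum.inl 4, Sum.inl 0], fun j v hv => ?_⟩
    have : ![v 3, v 4, v 0] = fun l => Sum.elim v (par j)
        ((![Sum.inl 3, Sum.inl 4, Sum.inl 0] : Fin 3 → ℕ ⊕ Empty) l) := by
      funext i; fin_cases i <;> rfl
    beta_reduce
    rw [this]
  have hU : UD K par (fun j v => ∃ b ∈ K j, ∀ z ∈ K j, (z ∈ b ↔ ∃ w ∈ K j, w ∈ v 1 ∧
      ZSat (K j) χ ![z, w, v 0])) := by
    refine UD.ex 2 (R := fun j v b => ∀ z ∈ K j, (z ∈ b ↔ ∃ w ∈ K j, w ∈ v 1 ∧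
      ZSat (K j) χ ![z, w, v 0])) ?_ (by intro j v x y; simp)
    refine UD.all 3 (R := fun j v z => (z ∈ v 2 ↔ ∃ w ∈ K j, w ∈ v 1 ∧
      ZSat (K j) χ ![z, w, v 0])) ?_ (by intro j v x y; simp)
    refine (UD.mem 3 2).iff ?_
    refine UD.ex 4 (R := fun j v w => w ∈ v 1 ∧
      ZSat (K j) χ ![v 3, w, v 0]) ?_ (by intro j v x y; simp)
    exact (UD.mem 4 1).and hχ
  have := hU.elem (j := false) (k := true) (s := s) h (fun p => p.elim) (fun p => p.elim)
    (fun l => if l = 1 then y else c) (by intro l; split_ifs; exacts [hy, hc])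
  exact this.1 hS

theorem stable_mem_lim.{u} {ι : Type} [PartialOrder ι] (D : DirSystem.{u} ι)
    (Mlim : Set ZFSet.{u}) (πe : ι → ZFSet.{u} → ZFSet.{u}) (hD : IsDirLimit D Mlim πe)
    (i : ι) (c : ZFSet.{u}) (hc : c ∈ D.M i) (χ : setL.BoundedFormula Empty 3)
    (hM : ∀ j, i ≤ j → ∀ x ∈ Mlim, x ∈ D.M j)
    (hχ : ∀ j, i ≤ j → ∀ x ∈ D.M j, ∀ y ∈ D.M j,
      (πe j x = y ↔ ZSat (D.M j).toSet χ ![x, y, D.pi i j c]))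
    (x : ZFSet.{u}) (hx : ∀ j, i ≤ j → x ∈ D.M j ∧ D.pi i j x = x)
    (hsub : ∀ y ∈ x, y ∈ Mlim) : x ∈ Mlim := by
  have hxi := (hx i le_rfl).1
  have h1 := preimage_set (D.zfc i).1 χ c hc (πe i)
    (by
      intro a ha b hb
      have := hχ i le_rfl a ha b hb
      rwa [D.map_id i c hc] at this) (elem_inj (hD.elem i)) x hxi
  obtain ⟨b, hb, hb'⟩ := preimage_transfer (hD.elem i) χ hc hxi h1
  have hxk : ∀ k, i ≤ k → πe k x = πe i x := by
    intro k hk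
    have := hD.compat i k hk x hxi
    rwa [(hx k hk).2] at this
  have hck : ∀ k, i ≤ k → πe k (D.pi i k c) = πe i c := fun k hk => hD.compat i k hk c hc
  have hiff : ∀ z ∈ Mlim, (z ∈ x ↔ z ∈ b) := by
    intro z hz
    rw [hb' z hz]
    constructor
    · intro hzx
      obtain ⟨k0, η0, hη0, e0⟩ := hD.exhaust z hz
      obtain ⟨k, hk0, hk⟩ := D.directed k0 i
      have hη := (D.elem k0 k hk0).1 _ hη0
      have e : πe k (D.pi k0 k η0) = z := (hD.compat k0 k hk0 η0 hη0).trans e0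
      have hzk := hM k hk z hz
      have hck' := (D.elem i k hk).1 _ hc
      refine ⟨πe k z, (hD.elem k).1 _ hzk, ?_, ?_⟩
      · rw [← hxk k hk]
        exact (elem_mem (hD.elem k) z hzk x (hx k hk).1).1 hzx
      · have := (elem_chi (hD.elem k) χ hη hzk hck').1 ((hχ k hk _ hη _ hzk).1 e)
        rwa [e, hck k hk] at this
    · rintro ⟨w, hw, hwx, hwχ⟩
      obtain ⟨k0, η0, hη0, e0⟩ := hD.exhaust z hz
      obtain ⟨k1, w1, hw1, e1⟩ := hD.exhaust w hw
      obtain ⟨k2, hk02, hk12⟩ := D.directed k0 k1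
      obtain ⟨k, hk2, hk⟩ := D.directed k2 i
      have hk0 := hk02.trans hk2
      have hk1 := hk12.trans hk2
      have hη := (D.elem k0 k hk0).1 _ hη0
      have e : πe k (D.pi k0 k η0) = z := (hD.compat k0 k hk0 η0 hη0).trans e0
      have hw' := (D.elem k1 k hk1).1 _ hw1
      have e' : πe k (D.pi k1 k w1) = w := (hD.compat k1 k hk1 w1 hw1).trans e1
      have hck' := (D.elem i k hk).1 _ hc
      rw [← e, ← e', ← hck k hk] at hwχ
      have h2 := (hχ k hk _ hη _ hw').2 ((elem_chi (hD.elem k) χ hη hw' hck').2 hwχ)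
      rw [e] at h2
      rw [← e', ← h2, ← hxk k hk] at hwx
      exact (elem_mem (hD.elem k) z (hM k hk z hz) x (hx k hk).1).2 hwx
  have : x = b := by
    ext z
    constructor
    · intro hz; exact (hiff z (hsub z hz)).1 hz
    · intro hz; exact (hiff z (hD.trans b hb z hz)).2 hz
  rw [this]; exact hb

theorem elem_ord.{u} {S T : Set ZFSet.{u}} {s : ZFSet.{u} → ZFSet.{u}} (h : IsElem S T s)
    (hS : IsTransClass S) (hT : IsTransClass T) {x : ZFSet.{u}} (hx : x ∈ S)
    (ho : x.IsOrdinal) : (s x).IsOrdinal := by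
  let K : Bool → Set ZFSet.{u} := fun j => cond j T S
  let par : Bool → Empty → ZFSet.{u} := fun _ e => e.elim
  have hU : UD K par (fun _ v => (v 0).IsOrdinal) :=
    UD.ord (by intro j; cases j; exacts [hS, hT]) 0
  exact (hU.elem (j := false) (k := true) (s := s) h (fun p => p.elim) (fun p => p.elim)
    (fun _ => x) (fun _ => hx)).1 ho

section Sys
universe u
variable {ι : Type} [PartialOrder ι]

/-- Elements fixed by the system from `i` on. -/
def Stable (D : DirSystem.{u} ι) (i : ι) (x : ZFSet.{u}) : Prop :=
  ∀ j, i ≤ j → x ∈ D.M j ∧ D.pi i j x = x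

/-- Uniform definability over the tail of a system. -/
def UDS (D : DirSystem.{u} ι) (i : ι) (R : {j // i ≤ j} → (ℕ → ZFSet.{u}) → Prop) : Prop :=
  UD (fun j : {j // i ≤ j} => (D.M j.1).toSet)
    (fun j (p : {a // a ∈ D.M i}) => D.pi i j.1 p.1) R

theorem par_mem (D : DirSystem.{u} ι) (i : ι) (j : {j // i ≤ j}) (p : {a // a ∈ D.M i}) :
    D.pi i j.1 p.1 ∈ (D.M j.1).toSet := (D.elem i j.1 j.2).1 _ p.2

theorem stable_of_def (D : DirSystem.{u} ι) (i : ι) (x : ZFSet.{u})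
    (hx : ∀ j, i ≤ j → x ∈ D.M j) (h : UDS D i (fun _ v => v 0 = x)) : Stable D i x := by
  intro j hj
  refine ⟨hx j hj, ?_⟩
  have := UD.elem h (j := ⟨i, le_rfl⟩) (k := ⟨j, hj⟩) (s := D.pi i j) (D.elem i j hj)
    (fun p => par_mem D i _ p) (fun p => by
      show D.pi i j (D.pi i i p.1) = D.pi i j p.1
      rw [D.map_id i p.1 p.2]) (fun _ => x) (fun _ => hx i le_rfl)
  exact this.1 rfl

theorem subst_stable (D : DirSystem.{u} ι) (i : ι) (R : (ℕ → ZFSet.{u}) → Prop)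
    (h : UDS D i (fun _ v => R v)) (n m : ℕ) (v : ℕ → ZFSet.{u})
    (hv : ∀ k < n, Stable D i (v k)) :
    UDS D i (fun _ u => R (fun k => if k < n then v k else u m)) := by
  refine UD.congr (UD.subst h (fun k => if hk : k < n then
    Sum.inr ⟨v k, (hv k hk i le_rfl).1⟩ else Sum.inl m) (par_mem D i)) ?_
  intro j u hu
  have : (fun k => if k < n then v k else u m) = fun k => Sum.elim u
      (fun (p : {a // a ∈ D.M i}) => D.pi i j.1 p.1) (if hk : k < n then
    Sum.inr ⟨v k, (hv k hk i le_rfl).1⟩ else Sum.inl m) := by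
    funext k
    by_cases hk : k < n
    · simp only [hk, if_true, dif_pos, Sum.elim_inr]
      exact ((hv k hk j.1 j.2).2).symm
    · simp [hk]
  rw [this]

theorem stable_tuple (D : DirSystem.{u} ι) (i : ι) (N : Set ZFSet.{u})
    (hN : ∀ j, i ≤ j → ∀ x ∈ N, x ∈ D.M j) (hNd : ∀ k, UDS D i (fun _ v => v k ∈ N)) (n : ℕ) :
    ∀ (S : (ℕ → ZFSet.{u}) → Prop), UDS D i (fun _ v => S v) →
      (∀ v w, (∀ k < n, v k = w k) → (S v ↔ S w)) →
      (∀ v, S v → ∀ k < n, v k ∈ N ∧ (v k).IsOrdinal) → (∃ v, S v) →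
      ∃ v, S v ∧ ∀ k < n, Stable D i (v k) := by
  induction n with
  | zero =>
    intro S _ _ _ ⟨v, hv⟩
    exact ⟨v, hv, fun k hk => absurd hk (Nat.not_lt_zero k)⟩
  | succ n ih =>
    intro S hS hdep hord ⟨v0, hv0⟩
    have hS' : UDS D i (fun j v => ∃ x ∈ (D.M j.1).toSet, x ∈ N ∧ S (Function.update v n x)) := by
      refine UD.ex n (R := fun j v x => x ∈ N ∧ S (Function.update v n x)) ?_
        (by intro j v x y; simp)
      refine UD.and (hNd n) (UD.congr hS ?_)
      intro j v _
      simp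
    obtain ⟨v, ⟨x, hxN, hx⟩, hst⟩ := ih (fun v => ∃ x ∈ N, S (Function.update v n x))
      (UD.congr hS' (fun j v _ => ⟨fun ⟨x, h1, h2⟩ => ⟨x, hN _ j.2 x h1, h1, h2⟩,
        fun ⟨x, _, h1, h2⟩ => ⟨x, h1, h2⟩⟩))
      (by
        intro v w hvw
        refine exists_congr fun x => and_congr_right fun _ => hdep _ _ ?_
        intro k hk
        by_cases hkn : k = n
        · subst hkn; simp
        · rw [Function.update_of_ne hkn, Function.update_of_ne hkn]
          exact hvw k (by omega))
      (by
        rintro v ⟨x, hx, h⟩ k hk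
        have := hord _ h k (by omega)
        rwa [Function.update_of_ne (by omega)] at this)
      ⟨v0, v0 n, (hord _ hv0 n (by omega)).1, by simpa using hv0⟩
    let A : ZFSet.{u} → Prop := fun y => S (Function.update v n y)
    have hAo : ∀ y, A y → y ∈ N ∧ y.IsOrdinal := by
      intro y hy
      have := hord _ hy n (by omega)
      simpa using this
    have hA : ∀ m, UDS D i (fun _ u => A (u m)) := by
      intro m
      refine UD.congr (subst_stable D i S hS n m v hst) ?_
      intro j u _
      refine hdep _ _ ?_
      intro k hk
      by_cases hkn : k = n
      · subst hkn; simp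
      · rw [Function.update_of_ne hkn, if_pos (by omega)]
    obtain ⟨y, hy, hmin⟩ := ZFSet.mem_wf.has_min {y | A y} ⟨x, hx⟩
    have hyst : Stable D i y := by
      refine stable_of_def D i y (fun j hj => hN j hj y (hAo y hy).1) ?_
      have h1 : UDS D i (fun j u => A (u 0) ∧ ∀ z ∈ (D.M j.1).toSet, z ∈ u 0 → ¬ A z) := by
        refine UD.and (hA 0) ?_
        refine UD.all 1 (R := fun j u z => z ∈ u 0 → ¬ A z) ?_ (by intro j v x y; simp)
        exact UD.imp (UD.mem 1 0) (UD.not (hA 1))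
      refine UD.congr h1 ?_
      intro j u hu
      constructor
      · intro e
        rw [e]
        exact ⟨hy, fun z _ hz hAz => hmin z hAz hz⟩
      · rintro ⟨h2, h3⟩
        rcases ZFSet.IsOrdinal.mem_trichotomous (hAo _ h2).2 (hAo _ hy).2 with h | h | h
        · exact absurd h (hmin _ h2)
        · exact h
        · exact absurd hy (h3 y (hN _ j.2 y (hAo y hy).1) h)
    refine ⟨Function.update v n y, hy, ?_⟩
    intro k hk
    by_cases hkn : k = n
    · subst hkn; simpa using hyst
    · rw [Function.update_of_ne hkn]
      exact hst k (by omega)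

theorem uds_of_def (D : DirSystem.{u} ι) (i0 i : ι) (hi : i0 ≤ i) (N : Set ZFSet.{u})
    (a : ZFSet.{u}) (ha : a ∈ D.M i0) (ψ : setL.BoundedFormula Empty 2)
    (h : ∀ j, i0 ≤ j → ∀ x, x ∈ D.M j → (x ∈ N ↔ ZSat (D.M j).toSet ψ ![x, D.pi i0 j a]))
    (k : ℕ) : UDS D i (fun _ v => v k ∈ N) := by
  refine ⟨2, ψ, ![Sum.inl k, Sum.inr ⟨D.pi i0 i a, (D.elem i0 i hi).1 _ ha⟩], ?_⟩
  intro j v hv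
  beta_reduce
  rw [h j.1 (hi.trans j.2) _ (hv k)]
  have : ![v k, D.pi i0 j.1 a] = fun l => Sum.elim v
      (fun (p : {a // a ∈ D.M i}) => D.pi i j.1 p.1)
      ((![Sum.inl k, Sum.inr ⟨D.pi i0 i a, (D.elem i0 i hi).1 _ ha⟩] :
        Fin 2 → ℕ ⊕ {a // a ∈ D.M i}) l) := by
    funext l
    fin_cases l
    · rfl
    · exact (D.map_comp i0 i j.1 hi j.2 a ha).symm
  rw [this]

end Sys

end Helpers

/-- Let `C` and `D` be well-founded directed systems of models of set
theory over the same directed partial order, with (transitivized) direct limits `Nlim`, `Mlim`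
and direct limit maps `σe`, `πe`.  Suppose (1) `C.M i ⊆ D.M i` for all `i`; (2) each `C.M i`
satisfies `V = HOD`; and (3) `Nlim`, `Mlim`, and the family `{πe i}` are uniformly definable
over `D`.  Then `Nlim ⊆ Mlim`. -/
theorem direct_limit_subset {ι : Type} [PartialOrder ι]
    (C D : DirSystem ι)
    (Nlim Mlim : Set ZFSet) (σe πe : ι → ZFSet → ZFSet)
    (hC : IsDirLimit C Nlim σe) (hD : IsDirLimit D Mlim πe)
    (hsub : ∀ i, (C.M i : ZFSet) ⊆ D.M i)
    (hhod : ∀ i, ModelsVeqHOD (C.M i).toSet)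
    (hNdef : UnifDef1 D Set.univ (fun _ => Nlim))
    (hMdef : UnifDef1 D Set.univ (fun _ => Mlim))
    (hπdef : UnifDef2 D (fun i x y => x ∈ D.M i ∧ πe i x = y)) :
    Nlim ⊆ Mlim := by
  intro x0 hx0
  by_contra hx0M
  obtain ⟨iN, -, aN, haN, ψN, hN⟩ := hNdef
  obtain ⟨iM, -, aM, haM, ψM, hM⟩ := hMdef
  obtain ⟨iP, c0, hc0, χ, hP⟩ := hπdef
  obtain ⟨i1, hN1, hM1⟩ := D.directed iN iM
  obtain ⟨i, hi1, hPi⟩ := D.directed i1 iP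
  have hNi := hN1.trans hi1
  have hMi := hM1.trans hi1
  have hNsub : ∀ j, i ≤ j → ∀ x ∈ Nlim, x ∈ D.M j := fun j hj => (hN j (hNi.trans hj)).2.1
  have hMsub : ∀ j, i ≤ j → ∀ x ∈ Mlim, x ∈ D.M j := fun j hj => (hM j (hMi.trans hj)).2.1
  have hNd : ∀ k, UDS D i (fun _ v => v k ∈ Nlim) :=
    uds_of_def D iN i hNi Nlim aN haN ψN (fun j hj => (hN j hj).2.2)
  have hMd : ∀ k, UDS D i (fun _ v => v k ∈ Mlim) :=
    uds_of_def D iM i hMi Mlim aM haM ψM (fun j hj => (hM j hj).2.2)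
  -- an epsilon-minimal counterexample
  obtain ⟨x, ⟨hxN, hxM⟩, hmin⟩ := ZFSet.mem_wf.has_min {y | y ∈ Nlim ∧ y ∉ Mlim} ⟨x0, hx0, hx0M⟩
  have hxsub : ∀ z ∈ Nlim, z ∈ x → z ∈ Mlim := by
    intro z hz hzx
    by_contra hcon
    exact hmin z ⟨hz, hcon⟩ hzx
  obtain ⟨l, xb, hxb, rfl⟩ := hC.exhaust x hxN
  obtain ⟨n, φ, p, hp, hdef⟩ := hhod l xb hxb
  have hdef' := transfer_def (hC.elem l) φ p (fun i => (hp i).1) xb hxb hdef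
  let S : (ℕ → ZFSet) → Prop := fun v => (∀ k : Fin n, v k ∈ Nlim ∧ (v k).IsOrdinal) ∧
    ∃ y ∈ Nlim, y ∉ Mlim ∧ (∀ z ∈ Nlim, z ∈ y → z ∈ Mlim) ∧
      ∀ z ∈ Nlim, (ZSat Nlim φ (Fin.snoc (fun k : Fin n => v k) z) ↔ z = y)
  have hφ : UDS D i (fun _ v => ZSat Nlim φ (fun k : Fin (n + 1) => v k)) :=
    UD.rel (fun j x hx => hNsub j.1 j.2 x hx) hNd φ
  have hφ' : UDS D i (fun _ v => ZSat Nlim φ (Fin.snoc (fun k : Fin n => v k) (v n))) := by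
    refine UD.congr hφ fun j v _ => ?_
    have : (Fin.snoc (fun k : Fin n => v k) (v n) : Fin (n + 1) → ZFSet) =
        fun k : Fin (n + 1) => v k := by
      funext k
      refine Fin.lastCases ?_ (fun k => ?_) k <;> simp
    rw [this]
  have hupd : ∀ (v : ℕ → ZFSet) (x : ZFSet) (m : ℕ), n ≤ m →
      (fun k : Fin n => Function.update v m x k) = fun k : Fin n => v k := by
    intro v x m hm
    funext k
    rw [Function.update_of_ne (by have := k.2; omega)]
  have hS : UDS D i (fun _ v => S v) := by
    have h1 : UDS D i (fun j v => ∃ y ∈ (D.M j.1).toSet, y ∈ Nlim ∧ y ∉ Mlim ∧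
        (∀ z ∈ (D.M j.1).toSet, z ∈ Nlim → z ∈ y → z ∈ Mlim) ∧
        ∀ z ∈ (D.M j.1).toSet, z ∈ Nlim →
          (ZSat Nlim φ (Fin.snoc (fun k : Fin n => v k) z) ↔ z = y)) := by
      refine UD.ex (n + 1) (R := fun (j : {j // i ≤ j}) v y => y ∈ Nlim ∧ y ∉ Mlim ∧
        (∀ z ∈ (D.M j.1).toSet, z ∈ Nlim → z ∈ y → z ∈ Mlim) ∧
        ∀ z ∈ (D.M j.1).toSet, z ∈ Nlim →
          (ZSat Nlim φ (Fin.snoc (fun k : Fin n => v k) z) ↔ z = y)) ?_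
        (by intro j v x y; rw [hupd v x (n + 1) (by omega)])
      refine UD.and (hNd _) (UD.and (UD.not (hMd _)) (UD.and ?_ ?_))
      · refine UD.all n (R := fun j v z => z ∈ Nlim → z ∈ v (n + 1) → z ∈ Mlim) ?_
          (by intro j v x y; simp)
        exact UD.imp (hNd _) (UD.imp (UD.mem _ _) (hMd _))
      · refine UD.all n (R := fun j v z => z ∈ Nlim →
          (ZSat Nlim φ (Fin.snoc (fun k : Fin n => v k) z) ↔ z = v (n + 1))) ?_
          (by intro j v x y; rw [hupd v x n le_rfl]; simp)
        exact UD.imp (hNd _) (UD.iff hφ' (UD.eq _ _))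
    have h0 : UDS D i (fun j v => ∀ k : Fin n, v k ∈ Nlim ∧ (v k).IsOrdinal) :=
      UD.allFin (fun k => UD.and (hNd _) (UD.ord (fun (j : {j // i ≤ j}) => (D.zfc j.1).1.1) _))
    refine UD.congr (UD.and h0 h1) ?_
    intro j v _
    refine and_congr_right fun _ => ?_
    constructor
    · rintro ⟨y, a, b, c, d⟩
      exact ⟨y, hNsub _ j.2 y a, a, b, fun z _ => c z, fun z _ => d z⟩
    · rintro ⟨y, _, a, b, c, d⟩
      exact ⟨y, a, b, fun z hz => c z (hNsub _ j.2 z hz) hz, fun z hz => d z (hNsub _ j.2 z hz) hz⟩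
  obtain ⟨v, ⟨hv, y, hyN, hyM, hysub, hydef⟩, hst⟩ := stable_tuple D i Nlim hNsub hNd n S hS
    (by
      intro v w hvw
      have : (fun k : Fin n => v k) = fun k : Fin n => w k := funext fun k => hvw k k.2
      have h2 : (∀ k : Fin n, v k ∈ Nlim ∧ (v k).IsOrdinal) ↔
          (∀ k : Fin n, w k ∈ Nlim ∧ (w k).IsOrdinal) :=
        forall_congr' fun k => by rw [hvw k k.2]
      simp only [S, this, h2])
    (fun v hv k hk => hv.1 ⟨k, hk⟩)
    (by
      refine ⟨fun k => if h : k < n then σe l (p ⟨k, h⟩) else ∅, ?_, σe l xb, hxN, hxM, hxsub, ?_⟩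
      · intro k
        simp only [k.2, dif_pos]
        exact ⟨(hC.elem l).1 _ (hp k).1,
          elem_ord (hC.elem l) (C.zfc l).1.1 hC.trans (hp k).1 (hp k).2⟩
      · have : (fun k : Fin n => if h : (k : ℕ) < n then σe l (p ⟨k, h⟩) else ∅) =
            fun k => σe l (p k) := by
          funext k
          simp
        rw [this]
        exact hdef')
  have hyst : Stable D i y := by
    refine stable_of_def D i y (fun j hj => hNsub j hj y hyN) ?_
    refine UD.congr (UD.and (hNd 0) (subst_stable D i _ hφ' n 0 v hst)) ?_
    intro j u _
    have : (fun k : Fin n => if (k : ℕ) < n then v k else u 0) = fun k : Fin n => v k := by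
      funext k
      simp
    simp only [this, lt_irrefl, if_false]
    constructor
    · intro e
      rw [e]
      exact ⟨hyN, (hydef y hyN).2 rfl⟩
    · rintro ⟨a, b⟩
      exact (hydef _ a).1 b
  refine hyM (stable_mem_lim D Mlim πe hD i (D.pi iP i c0) ((D.elem iP i hPi).1 _ hc0) χ hMsub
    ?_ y hyst (fun z hz => hysub z (hC.trans y hyN z hz) hz))
  intro j hj a ha b hb
  rw [D.map_comp iP i j hPi hj c0 hc0, ← (hP j (hPi.trans hj)).2 a ha b hb]
  exact ⟨fun h => ⟨ha, h⟩, fun h => h.2⟩
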